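/- Let α, β₁, β₂ be intuitionistic fuzzy values with β₂ ⊊ β₁ ⊊ α in Atanassov's order. Then Z(α, β₁) < Z(α, β₂), and consequently JS(α, β₁) < JS(α, β₂). -/

import Mathlib

/-- `L p q = p·log₂(2p/(p+q)) + q·log₂(2q/(p+q))`, with Lean's conventions
`0 * log₂ _ = 0` and `x / 0 = 0`, `log₂ 0 = 0` implementing `0·log 0 = 0`
and `0·log(0/0) = 0`. -/
noncomputable def L (p q : ℝ) : ℝ :=
  p * Real.logb 2 (2 * p / (p + q)) + q * Real.logb 2 (2 * q / (p + q))

/-- An intuitionistic fuzzy value: a pair `⟨μ, ν⟩` with `0 ≤ μ`, `0 ≤ ν`,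
`μ + ν ≤ 1` (hence also `μ ≤ 1` and `ν ≤ 1`). -/
@[ext]
structure IFV where
  mu : ℝ
  nu : ℝ
  mu_nonneg : 0 ≤ mu
  nu_nonneg : 0 ≤ nu
  sum_le : mu + nu ≤ 1

/-- `Z(α,β) = L(1−μ_α, 1−μ_β) + L(ν_α, ν_β)`. -/
noncomputable def Z (a b : IFV) : ℝ := L (1 - a.mu) (1 - b.mu) + L a.nu b.nu

/-- The normalized Jensen–Shannon IF divergence `JS(α,β) = √(Z(α,β)/2)`. -/
noncomputable def JS (a b : IFV) : ℝ := Real.sqrt (Z a b / 2)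

/-- Atanassov's order: `α ⊂ β` iff `μ_α ≤ μ_β` and `ν_α ≥ ν_β`. -/
def IFV.sub (a b : IFV) : Prop := a.mu ≤ b.mu ∧ b.nu ≤ a.nu

/-- Strict Atanassov order: `α ⊊ β` iff `α ⊂ β` and `α ≠ β`. -/
def IFV.ssub (a b : IFV) : Prop := a.sub b ∧ a ≠ b

/-- The IFV `⟨1, 0⟩`. -/
def IFV.posOne : IFV := ⟨1, 0, by norm_num, le_rfl, by norm_num⟩

/-- The IFV `⟨0, 1⟩`. -/
def IFV.negOne : IFV := ⟨0, 1, le_rfl, by norm_num, by norm_num⟩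

/-!
Up to a constant factor, `L p q` is the Jensen gap of `x ↦ x log x` at `p` and `q`, and its
derivative in `q` is `log₂ (2q / (p + q))`, which is positive for `q > p`. So `L p` increases
strictly to the right of `p`. When `β₂ ⊊ β₁ ⊂ α`, going from `β₁` to `β₂` moves each argument
`1 - μ`, `ν` further to the right of its value at `α`, and one of them strictly.
-/

lemma L_comm (p q : ℝ) : L p q = L q p := by
  unfold L
  rw [add_comm q p, add_comm]

lemma mul_logb_two_mul_div (p : ℝ) {s : ℝ} (hs : s ≠ 0) :
    p * Real.logb 2 (2 * p / s) = p + p * (Real.log p - Real.log s) / Real.log 2 := by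
  rcases eq_or_ne p 0 with rfl | hp
  · simp
  · have hlog2 : Real.log 2 ≠ 0 := (Real.log_pos one_lt_two).ne'
    rw [Real.logb, Real.log_div (mul_ne_zero two_ne_zero hp) hs, Real.log_mul two_ne_zero hp]
    field_simp
    ring

lemma L_eq_add_negMulLog (p q : ℝ) :
    L p q = p + q +
      (Real.negMulLog (p + q) - Real.negMulLog p - Real.negMulLog q) / Real.log 2 := by
  rcases eq_or_ne (p + q) 0 with hpq | hpq
  · -- Both sides vanish: `L` divides by zero, and `negMulLog` is odd because `log` is even.
    obtain rfl : q = -p := by linarith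
    simp [L, Real.negMulLog]
  · rw [L, mul_logb_two_mul_div p hpq, mul_logb_two_mul_div q hpq]
    simp only [Real.negMulLog]
    ring

lemma L_self (p : ℝ) : L p p = 0 := by
  rcases eq_or_ne p 0 with rfl | hp
  · simp [L]
  · have hdiv : 2 * p / (p + p) = 1 := by rw [← two_mul, div_self (mul_ne_zero two_ne_zero hp)]
    simp [L, hdiv]

lemma continuous_L : Continuous (Function.uncurry L) := by
  simp only [Function.uncurry_def, L_eq_add_negMulLog]
  fun_prop

lemma hasDerivAt_L {p q : ℝ} (hq : q ≠ 0) (hpq : p + q ≠ 0) :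
    HasDerivAt (L p) (Real.logb 2 (2 * q / (p + q))) q := by
  have hlog2 : Real.log 2 ≠ 0 := (Real.log_pos one_lt_two).ne'
  have hsum : HasDerivAt (fun x ↦ p + x) 1 q := (hasDerivAt_id q).const_add p
  have hgap : HasDerivAt
      (fun x ↦ Real.negMulLog (p + x) - Real.negMulLog p - Real.negMulLog x)
      ((-Real.log (p + q) - 1) * 1 - (-Real.log q - 1)) q :=
    (((Real.hasDerivAt_negMulLog hpq).comp q hsum).sub_const _).sub
      (Real.hasDerivAt_negMulLog hq)
  rw [funext (L_eq_add_negMulLog p)]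
  refine (hsum.add (hgap.div_const (Real.log 2))).congr_deriv ?_
  rw [Real.logb, Real.log_div (mul_ne_zero two_ne_zero hq) hpq, Real.log_mul two_ne_zero hq]
  field_simp
  ring

lemma strictMonoOn_L {p : ℝ} (hp : 0 ≤ p) : StrictMonoOn (L p) (Set.Ici p) := by
  refine strictMonoOn_of_deriv_pos (convex_Ici p) (continuous_L.uncurry_left p).continuousOn ?_
  intro q hq
  have hpq : p < q := by simpa only [interior_Ici, Set.mem_Ioi] using hq
  have hq_pos : 0 < q := hp.trans_lt hpq
  have hsum_pos : 0 < p + q := by positivity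
  rw [(hasDerivAt_L hq_pos.ne' hsum_pos.ne').deriv]
  exact Real.logb_pos one_lt_two ((one_lt_div hsum_pos).2 (by linarith))

lemma L_nonneg {p q : ℝ} (hp : 0 ≤ p) (hq : 0 ≤ q) : 0 ≤ L p q := by
  wlog hpq : p ≤ q generalizing p q
  · rw [L_comm]
    exact this hq hp (le_of_not_ge hpq)
  · simpa only [L_self] using (strictMonoOn_L hp).monotoneOn Set.self_mem_Ici hpq hpq

namespace IFV

lemma mu_le_one (a : IFV) : a.mu ≤ 1 := by
  linarith [a.sum_le, a.nu_nonneg]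

lemma ssub.mu_lt_or_nu_lt {a b : IFV} (h : a.ssub b) : a.mu < b.mu ∨ b.nu < a.nu := by
  obtain ⟨⟨hmu, hnu⟩, hne⟩ := h
  by_contra! hle
  exact hne (IFV.ext (hmu.antisymm hle.1) (hle.2.antisymm hnu))

end IFV

lemma Z_nonneg (a b : IFV) : 0 ≤ Z a b :=
  add_nonneg (L_nonneg (sub_nonneg.2 a.mu_le_one) (sub_nonneg.2 b.mu_le_one))
    (L_nonneg a.nu_nonneg b.nu_nonneg)

lemma Z_lt_Z_of_ssub_of_sub {a b c : IFV} (hcb : c.ssub b) (hba : b.sub a) : Z a b < Z a c := by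
  have hL_mu := strictMonoOn_L (sub_nonneg.2 a.mu_le_one)
  have hL_nu := strictMonoOn_L a.nu_nonneg
  have hb_mu : 1 - a.mu ≤ 1 - b.mu := sub_le_sub_left hba.1 1
  have hc_mu : 1 - b.mu ≤ 1 - c.mu := sub_le_sub_left hcb.1.1 1
  have hb_nu : a.nu ≤ b.nu := hba.2
  have hc_nu : b.nu ≤ c.nu := hcb.1.2
  have hmu_le := hL_mu.monotoneOn hb_mu (hb_mu.trans hc_mu) hc_mu
  have hnu_le := hL_nu.monotoneOn hb_nu (hb_nu.trans hc_nu) hc_nu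
  rcases hcb.mu_lt_or_nu_lt with hmu | hnu
  · exact add_lt_add_of_lt_of_le
      (hL_mu hb_mu (hb_mu.trans hc_mu) (sub_lt_sub_left hmu 1)) hnu_le
  · exact add_lt_add_of_le_of_lt hmu_le (hL_nu hb_nu (hb_nu.trans hc_nu) hnu)

lemma JS_lt_JS_iff {a b c d : IFV} : JS a b < JS c d ↔ Z a b < Z c d := by
  rw [JS, JS, Real.sqrt_lt_sqrt_iff (div_nonneg (Z_nonneg a b) zero_le_two),
    div_lt_div_iff_of_pos_right two_pos]

theorem Z_JS_strictAnti_of_ssub_chain (a b1 b2 : IFV)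
    (h1 : b2.ssub b1) (h2 : b1.ssub a) :
    Z a b1 < Z a b2 ∧ JS a b1 < JS a b2 := by
  have hZ : Z a b1 < Z a b2 := Z_lt_Z_of_ssub_of_sub h1 h2.1
  exact ⟨hZ, JS_lt_JS_iff.2 hZ⟩
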